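/- Let α₀ > 0, β₀ > 0 and λ > 0, and let (φ,ψ) ∈ H¹(ℝ)×H¹(ℝ) satisfy ∫_ℝ φ² ψ dx = λ and I(φ,ψ) = M_λ. Then φ and ψ decay exponentially at infinity: there exist constants δ > 0 and C > 0 such that |φ(x)| ≤ C e^{−δ|x|} and |ψ(x)| ≤ C e^{−δ|x|} for all x ∈ ℝ. -/

import Mathlib

/-!
The proof is an Agmon-type weighted energy estimate.

Since `I` is homogeneous of degree two and `J(f, g) = ∫ f² g` of degree three, minimality of
`(φ, ψ)` gives `M³ J(f, g)² ≤ lam² I(f, g)³` for every admissible pair with `J(f, g) > 0`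
(`scaled_min`). Differentiating along `(φ + t u, ψ + t v)` at `t = 0` yields the weak
Euler–Lagrange equation (`euler_lagrange`). It is tested with `u = φ η²`, `v = ψ η²`, where
`η x = 1 / (exp (-s x) + ε)` is a bounded regularisation of `exp (s x)` with `|η'| ≤ |s| η`.
As `ψ → 0` at infinity, the cubic term `φ² ψ η²` is absorbed outside a compact set into the positive
quadratic terms when `s² = min α₀ β₀ / 4`, so the `H¹` norms of `φ η` and `ψ η` are bounded
uniformly in `ε` (`weighted_bound`). The embedding `H¹ ⊂ L^∞` turns this into a pointwise bound;
letting `ε → 0` for `s = ± δ` gives the decay in both directions.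
-/

open MeasureTheory Filter Topology

noncomputable section

/-- Membership in `H¹(ℝ)`: `f` is differentiable with `f` and `f'` square-integrable. -/
def InH1 (f : ℝ → ℝ) : Prop :=
  Differentiable ℝ f ∧ Integrable (fun x => f x ^ 2) ∧ Integrable (fun x => deriv f x ^ 2)

/-- The functional `I(f,g) = ∫ (f'² + g'² + α₀ f² + β₀ g²)`. -/
def Ifun (α₀ β₀ : ℝ) (f g : ℝ → ℝ) : ℝ :=
  ∫ x : ℝ, (deriv f x ^ 2 + deriv g x ^ 2 + α₀ * f x ^ 2 + β₀ * g x ^ 2)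

/-- The set of values `I(f,g)` over pairs in `H¹ × H¹` with `∫ f² g = lam`. -/
def IvalSet (α₀ β₀ lam : ℝ) : Set ℝ :=
  {m | ∃ f g : ℝ → ℝ, InH1 f ∧ InH1 g ∧ (∫ x : ℝ, f x ^ 2 * g x) = lam ∧ Ifun α₀ β₀ f g = m}

/-- `M_lam`, the infimum of `I` subject to the constraint `∫ f² g = lam`. -/
def Mfun (α₀ β₀ lam : ℝ) : ℝ := sInf (IvalSet α₀ β₀ lam)

/-! ### The space `H¹(ℝ)` -/

lemma integrable_mul_of_sq {a b : ℝ → ℝ} (ha : Integrable (fun x => a x ^ 2))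
    (hb : Integrable (fun x => b x ^ 2)) (ma : Measurable a) (mb : Measurable b) :
    Integrable (fun x => a x * b x) := by
  refine (ha.add hb).mono' (ma.mul mb).aestronglyMeasurable (ae_of_all _ fun x => ?_)
  simp only [Pi.add_apply, Real.norm_eq_abs]
  rw [abs_le]
  constructor <;> nlinarith [sq_nonneg (a x + b x), sq_nonneg (a x - b x)]

lemma InH1.measurable {f : ℝ → ℝ} (hf : InH1 f) : Measurable f := hf.1.continuous.measurable

lemma InH1.int_mul {f g : ℝ → ℝ} (hf : InH1 f) (hg : InH1 g) :
    Integrable (fun x => f x * g x) :=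
  integrable_mul_of_sq hf.2.1 hg.2.1 hf.measurable hg.measurable

lemma InH1.int_deriv_mul {f g : ℝ → ℝ} (hf : InH1 f) (hg : InH1 g) :
    Integrable (fun x => deriv f x * deriv g x) :=
  integrable_mul_of_sq hf.2.2 hg.2.2 (measurable_deriv f) (measurable_deriv g)

lemma InH1.hasDerivAt_sq {f : ℝ → ℝ} (hf : InH1 f) (x : ℝ) :
    HasDerivAt (fun x => f x ^ 2) (2 * (f x * deriv f x)) x := by
  refine ((hf.1 x).hasDerivAt.fun_pow 2).congr_deriv ?_
  simp; ring

lemma InH1.int_deriv_sq {f : ℝ → ℝ} (hf : InH1 f) :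
    Integrable (fun x => 2 * (f x * deriv f x)) :=
  (integrable_mul_of_sq hf.2.1 hf.2.2 hf.measurable (measurable_deriv f)).const_mul 2

lemma InH1.tendsto_atBot {f : ℝ → ℝ} (hf : InH1 f) :
    Tendsto (fun x => f x ^ 2) atBot (𝓝 0) :=
  tendsto_zero_of_hasDerivAt_of_integrableOn_Iic (a := 0) (fun x _ => hf.hasDerivAt_sq x)
    hf.int_deriv_sq.integrableOn hf.2.1.integrableOn

lemma InH1.tendsto_atTop {f : ℝ → ℝ} (hf : InH1 f) :
    Tendsto (fun x => f x ^ 2) atTop (𝓝 0) :=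
  tendsto_zero_of_hasDerivAt_of_integrableOn_Ioi (a := 0) (fun x _ => hf.hasDerivAt_sq x)
    hf.int_deriv_sq.integrableOn hf.2.1.integrableOn

/-- The embedding `H¹(ℝ) ⊂ L^∞(ℝ)`. -/
lemma InH1.sq_le {f : ℝ → ℝ} (hf : InH1 f) (x : ℝ) :
    f x ^ 2 ≤ ∫ y, (f y ^ 2 + deriv f y ^ 2) := by
  have h := integral_Iic_of_hasDerivAt_of_tendsto' (a := x) (fun x _ => hf.hasDerivAt_sq x)
    hf.int_deriv_sq.integrableOn hf.tendsto_atBot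
  rw [sub_zero] at h
  rw [← h]
  have hi : Integrable (fun y => f y ^ 2 + deriv f y ^ 2) := hf.2.1.add hf.2.2
  calc ∫ y in Set.Iic x, 2 * (f y * deriv f y)
      ≤ ∫ y in Set.Iic x, (f y ^ 2 + deriv f y ^ 2) :=
        setIntegral_mono hf.int_deriv_sq.integrableOn hi.integrableOn
          (fun y => by nlinarith [sq_nonneg (f y - deriv f y)])
    _ ≤ _ := setIntegral_le_integral hi (ae_of_all _ fun y => by positivity)

lemma InH1.bounded {f : ℝ → ℝ} (hf : InH1 f) : ∃ B > 0, ∀ x, |f x| ≤ B := by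
  refine ⟨√(∫ y, (f y ^ 2 + deriv f y ^ 2)) + 1, by positivity, fun x => ?_⟩
  have := Real.abs_le_sqrt (hf.sq_le x)
  linarith

lemma InH1.int_mul_mul {f g h : ℝ → ℝ} (hf : InH1 f) (hg : InH1 g) (hh : InH1 h) :
    Integrable (fun x => f x * g x * h x) := by
  obtain ⟨B, _, hB⟩ := hh.bounded
  exact (hf.int_mul hg).mul_bdd hh.measurable.aestronglyMeasurable (ae_of_all _ hB)

lemma InH1.small {f : ℝ → ℝ} (hf : InH1 f) {e : ℝ} (he : 0 < e) :
    ∃ R > 0, ∀ x, R ≤ |x| → |f x| ≤ e := by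
  have he2 : 0 < e ^ 2 := by positivity
  obtain ⟨a, ha⟩ := eventually_atTop.1 (hf.tendsto_atTop.eventually (gt_mem_nhds he2))
  obtain ⟨b, hb⟩ := eventually_atBot.1 (hf.tendsto_atBot.eventually (gt_mem_nhds he2))
  refine ⟨max 1 (max a (-b)), by positivity, fun x hx => ?_⟩
  have h1 := (le_max_right 1 (max a (-b))).trans hx
  have ha' := (le_max_left a (-b)).trans h1
  have hb' := (le_max_right a (-b)).trans h1
  refine abs_le_of_sq_le_sq (le_of_lt ?_) he.le
  rcases le_total 0 x with h | h
  · rw [abs_of_nonneg h] at ha'; exact ha x ha'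
  · rw [abs_of_nonpos h] at hb'; exact hb x (by linarith)

lemma InH1.add_smul {f u : ℝ → ℝ} (hf : InH1 f) (hu : InH1 u) (t : ℝ) :
    InH1 (fun x => f x + t * u x) ∧
      ∀ x, deriv (fun x => f x + t * u x) x = deriv f x + t * deriv u x := by
  have hd : ∀ x, HasDerivAt (fun x => f x + t * u x) (deriv f x + t * deriv u x) x :=
    fun x => (hf.1 x).hasDerivAt.add ((hu.1 x).hasDerivAt.const_mul t)
  refine ⟨⟨fun x => (hd x).differentiableAt, ?_, ?_⟩, fun x => (hd x).deriv⟩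
  · have := (hf.2.1.add ((hf.int_mul hu).const_mul (2 * t))).add (hu.2.1.const_mul (t ^ 2))
    refine this.congr (ae_of_all _ fun x => ?_)
    simp only [Pi.add_apply]; ring
  · have := (hf.2.2.add ((hf.int_deriv_mul hu).const_mul (2 * t))).add (hu.2.2.const_mul (t ^ 2))
    refine this.congr (ae_of_all _ fun x => ?_)
    simp only [Pi.add_apply, (hd x).deriv]; ring

lemma InH1.const_mul {f : ℝ → ℝ} (hf : InH1 f) (c : ℝ) : InH1 (fun x => c * f x) := by
  have := (hf.add_smul hf (c - 1)).1
  convert this using 2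
  ring

lemma InH1.mul_bdd {f p p' : ℝ → ℝ} (hf : InH1 f) (hp : ∀ x, HasDerivAt p (p' x) x) {B B' : ℝ}
    (hB : ∀ x, |p x| ≤ B) (hB' : ∀ x, |p' x| ≤ B') :
    InH1 (fun x => f x * p x) := by
  have hd : ∀ x, HasDerivAt (fun x => f x * p x) (deriv f x * p x + f x * p' x) x :=
    fun x => (hf.1 x).hasDerivAt.mul (hp x)
  have hdiff : Differentiable ℝ (fun x => f x * p x) := fun x => (hd x).differentiableAt
  have q : ∀ x, p x ^ 2 ≤ B ^ 2 := fun x => sq_le_sq' (abs_le.1 (hB x)).1 (abs_le.1 (hB x)).2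
  have q' : ∀ x, p' x ^ 2 ≤ B' ^ 2 := fun x => sq_le_sq' (abs_le.1 (hB' x)).1 (abs_le.1 (hB' x)).2
  refine ⟨hdiff, ?_, ?_⟩
  · refine (hf.2.1.const_mul (B ^ 2)).mono'
      (hdiff.continuous.measurable.pow_const 2).aestronglyMeasurable (ae_of_all _ fun x => ?_)
    rw [Real.norm_eq_abs, abs_of_nonneg (sq_nonneg _), mul_pow, mul_comm]
    exact mul_le_mul_of_nonneg_right (q x) (sq_nonneg _)
  · refine ((hf.2.2.const_mul (2 * B ^ 2)).add (hf.2.1.const_mul (2 * B' ^ 2))).mono'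
      ((measurable_deriv _).pow_const 2).aestronglyMeasurable (ae_of_all _ fun x => ?_)
    rw [Real.norm_eq_abs, abs_of_nonneg (sq_nonneg _), (hd x).deriv]
    simp only [Pi.add_apply]
    have h1 := mul_le_mul_of_nonneg_right (q x) (sq_nonneg (deriv f x))
    have h2 := mul_le_mul_of_nonneg_right (q' x) (sq_nonneg (f x))
    nlinarith [sq_nonneg (deriv f x * p x - f x * p' x)]

/-! ### The Euler–Lagrange equation -/

lemma Ifun_nonneg {α₀ β₀ : ℝ} (hα : 0 < α₀) (hβ : 0 < β₀) (f g : ℝ → ℝ) : 0 ≤ Ifun α₀ β₀ f g :=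
  integral_nonneg fun x => by positivity

/-- The minimisation property freed of its constraint by homogeneity; cubing avoids the exponent
`2 / 3`. -/
lemma scaled_min {α₀ β₀ lam : ℝ} (hα : 0 < α₀) (hβ : 0 < β₀) (hlam : 0 < lam) {f g : ℝ → ℝ}
    (hf : InH1 f) (hg : InH1 g) (hM : 0 ≤ Mfun α₀ β₀ lam) (hJ : 0 < ∫ x, f x ^ 2 * g x) :
    Mfun α₀ β₀ lam ^ 3 * (∫ x, f x ^ 2 * g x) ^ 2 ≤ lam ^ 2 * Ifun α₀ β₀ f g ^ 3 := by
  set j := ∫ x, f x ^ 2 * g x with hj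
  obtain ⟨c, hc, hc3⟩ : ∃ c : ℝ, 0 < c ∧ c ^ 3 = lam / j := by
    refine ⟨(lam / j) ^ ((3 : ℝ)⁻¹), by positivity, ?_⟩
    have := Real.rpow_inv_natCast_pow (n := 3) (x := lam / j) (by positivity) (by norm_num)
    exact_mod_cast this
  have key : Mfun α₀ β₀ lam ≤ c ^ 2 * Ifun α₀ β₀ f g := by
    refine csInf_le ⟨0, ?_⟩ ⟨_, _, hf.const_mul c, hg.const_mul c, ?_, ?_⟩
    · rintro m ⟨f, g, -, -, -, rfl⟩
      exact Ifun_nonneg hα hβ f g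
    · have : (fun x => (c * f x) ^ 2 * (c * g x)) = fun x => c ^ 3 * (f x ^ 2 * g x) := by
        ext x; ring
      rw [this, integral_const_mul, ← hj, hc3]
      field_simp
    · simp only [Ifun]
      rw [← integral_const_mul]
      congr 1
      ext x
      rw [deriv_const_mul _ (hf.1 x), deriv_const_mul _ (hg.1 x)]
      ring
  have k3 := pow_le_pow_left₀ hM key 3
  have e : (c ^ 2 * Ifun α₀ β₀ f g) ^ 3 = (c ^ 3) ^ 2 * Ifun α₀ β₀ f g ^ 3 := by ring
  rw [e, hc3] at k3
  calc _ ≤ _ := mul_le_mul_of_nonneg_right k3 (sq_nonneg j)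
    _ = _ := by field_simp

lemma euler_lagrange {α₀ β₀ lam : ℝ} (hα : 0 < α₀) (hβ : 0 < β₀) (hlam : 0 < lam)
    {φ ψ u v : ℝ → ℝ} (hφ : InH1 φ) (hψ : InH1 ψ) (hu : InH1 u) (hv : InH1 v)
    (hconstr : (∫ x : ℝ, φ x ^ 2 * ψ x) = lam)
    (hmin : Ifun α₀ β₀ φ ψ = Mfun α₀ β₀ lam) (hM : 0 < Mfun α₀ β₀ lam) :
    3 * lam * ∫ x, (deriv φ x * deriv u x + deriv ψ x * deriv v x + α₀ * (φ x * u x)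
        + β₀ * (ψ x * v x)) =
      Mfun α₀ β₀ lam * ∫ x, (2 * (φ x * u x * ψ x) + φ x * φ x * v x) := by
  set M := Mfun α₀ β₀ lam with hMdef
  set A := ∫ x, (deriv φ x * deriv u x + deriv ψ x * deriv v x + α₀ * (φ x * u x)
        + β₀ * (ψ x * v x)) with hA
  set c := ∫ x, (2 * (φ x * u x * ψ x) + φ x * φ x * v x) with hc
  set d := ∫ x, (u x * u x * ψ x + 2 * (φ x * u x * v x)) with hd
  set e := ∫ x, u x * u x * v x with he
  have iA : Integrable (fun x => deriv φ x * deriv u x + deriv ψ x * deriv v x + α₀ * (φ x * u x)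
        + β₀ * (ψ x * v x)) :=
    (((hφ.int_deriv_mul hu).add (hψ.int_deriv_mul hv)).add ((hφ.int_mul hu).const_mul _)).add
      ((hψ.int_mul hv).const_mul _)
  have iI : ∀ {f g : ℝ → ℝ}, InH1 f → InH1 g → Integrable (fun x =>
      deriv f x ^ 2 + deriv g x ^ 2 + α₀ * f x ^ 2 + β₀ * g x ^ 2) := fun {f g} hf hg =>
    ((hf.2.2.add hg.2.2).add (hf.2.1.const_mul _)).add (hg.2.1.const_mul _)
  have hI : ∀ t : ℝ, Ifun α₀ β₀ (fun x => φ x + t * u x) (fun x => ψ x + t * v x)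
      = M + 2 * t * A + t ^ 2 * Ifun α₀ β₀ u v := by
    intro t
    rw [← hmin, hA]
    simp only [Ifun]
    rw [← integral_const_mul, ← integral_const_mul, ← integral_add (iI hφ hψ) (iA.const_mul _),
      ← integral_add ((iI hφ hψ).fun_add (iA.const_mul _)) ((iI hu hv).const_mul _)]
    congr 1
    ext x
    rw [(hφ.add_smul hu t).2, (hψ.add_smul hv t).2]
    ring
  have i0 : Integrable (fun x => φ x ^ 2 * ψ x) := by
    simpa only [sq] using hφ.int_mul_mul hφ hψ
  have ic : Integrable (fun x => 2 * (φ x * u x * ψ x) + φ x * φ x * v x) :=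
    ((hφ.int_mul_mul hu hψ).const_mul 2).add (hφ.int_mul_mul hφ hv)
  have id : Integrable (fun x => u x * u x * ψ x + 2 * (φ x * u x * v x)) :=
    (hu.int_mul_mul hu hψ).add ((hφ.int_mul_mul hu hv).const_mul 2)
  have ie := hu.int_mul_mul hu hv
  have hJ : ∀ t : ℝ, ∫ x, (φ x + t * u x) ^ 2 * (ψ x + t * v x)
      = lam + t * c + t ^ 2 * d + t ^ 3 * e := by
    intro t
    rw [← hconstr, hc, hd, he, ← integral_const_mul, ← integral_const_mul, ← integral_const_mul,
      ← integral_add i0 (ic.const_mul _),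
      ← integral_add (i0.fun_add (ic.const_mul _)) (id.const_mul _),
      ← integral_add ((i0.fun_add (ic.const_mul _)).fun_add (id.const_mul _)) (ie.const_mul _)]
    congr 1
    ext x
    ring
  set D := Ifun α₀ β₀ u v
  let F : ℝ → ℝ := fun t => lam ^ 2 * (M + 2 * t * A + t ^ 2 * D) ^ 3
    - M ^ 3 * (lam + t * c + t ^ 2 * d + t ^ 3 * e) ^ 2
  have hloc : IsLocalMin F 0 := by
    have hcont : Continuous (fun t : ℝ => lam + t * c + t ^ 2 * d + t ^ 3 * e) := by fun_prop
    have hpos : ∀ᶠ t in 𝓝 (0 : ℝ), 0 < lam + t * c + t ^ 2 * d + t ^ 3 * e :=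
      hcont.continuousAt.eventually (lt_mem_nhds (by simpa using hlam))
    filter_upwards [hpos] with t ht
    have h := scaled_min hα hβ hlam (hφ.add_smul hu t).1 (hψ.add_smul hv t).1 hM.le
      (by rw [hJ]; exact ht)
    rw [hJ, hI] at h
    have h0 : F 0 = 0 := by simp only [F]; ring
    rw [h0]
    simp only [F]
    linarith
  have hder : HasDerivAt F (lam ^ 2 * (3 * M ^ 2 * (2 * A)) - M ^ 3 * (2 * lam * c)) 0 := by
    have hid := hasDerivAt_id (0 : ℝ)
    have p := ((((hid.const_mul 2).mul_const A).const_add M).add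
      ((hid.pow 2).mul_const D)).pow 3 |>.const_mul (lam ^ 2)
    have q := ((((hid.mul_const c).const_add lam).add ((hid.pow 2).mul_const d)).add
      ((hid.pow 3).mul_const e)).pow 2 |>.const_mul (M ^ 3)
    have pq : HasDerivAt F _ 0 := p.sub q
    refine pq.congr_deriv ?_
    simp
  have h0 := hloc.hasDerivAt_eq_zero hder
  have hne : 2 * lam * M ^ 2 ≠ 0 := by positivity
  apply mul_left_cancel₀ hne
  linear_combination h0

/-! ### The weighted energy estimate -/

/-- The bounded regularisation `1 / (exp (-s x) + ε)` of the exponential weight `exp (s x)`. -/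
def weight (s ε x : ℝ) : ℝ := (Real.exp (-s * x) + ε)⁻¹

/-- The derivative of `weight s ε`. -/
def weight' (s ε x : ℝ) : ℝ := s * Real.exp (-s * x) * weight s ε x ^ 2

lemma weight_hasDerivAt (s : ℝ) {ε : ℝ} (hε : 0 < ε) (x : ℝ) :
    HasDerivAt (weight s ε) (weight' s ε x) x := by
  have hne : Real.exp (-s * x) + ε ≠ 0 := by positivity
  have h := ((((hasDerivAt_id x).const_mul (-s)).exp).add_const ε).inv hne
  refine HasDerivAt.congr_deriv (f := weight s ε) h ?_
  simp only [weight', weight, id]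
  field_simp

lemma weight_pos (s : ℝ) {ε : ℝ} (hε : 0 < ε) (x : ℝ) : 0 < weight s ε x := by
  unfold weight; positivity

lemma weight_le (s : ℝ) {ε : ℝ} (hε : 0 < ε) (x : ℝ) : weight s ε x ≤ ε⁻¹ :=
  inv_anti₀ hε (by linarith [Real.exp_pos (-s * x)])

lemma weight_le_exp (s : ℝ) {ε : ℝ} (hε : 0 < ε) (x : ℝ) : weight s ε x ≤ Real.exp (s * x) := by
  have : Real.exp (s * x) = (Real.exp (-s * x))⁻¹ := by rw [← Real.exp_neg]; ring_nf
  rw [this]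
  exact inv_anti₀ (Real.exp_pos _) (by linarith)

lemma weight'_abs_le (s : ℝ) {ε : ℝ} (hε : 0 < ε) (x : ℝ) :
    |weight' s ε x| ≤ |s| * weight s ε x := by
  have h := weight_pos s hε x
  have h1 : Real.exp (-s * x) * weight s ε x ≤ 1 := by
    unfold weight
    rw [← div_eq_mul_inv, div_le_one (by positivity)]
    linarith
  unfold weight'
  rw [abs_mul, abs_mul, Real.abs_exp, abs_of_nonneg (sq_nonneg (weight s ε x))]
  have := mul_le_mul_of_nonneg_left h1 (mul_nonneg (abs_nonneg s) h.le)
  nlinarith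

/-- The weighted `H¹` estimate in pointwise form, with a constant independent of `ε` and of the sign of `s`. -/
lemma weighted_bound {α₀ β₀ lam : ℝ} (hα : 0 < α₀) (hβ : 0 < β₀) (hlam : 0 < lam)
    {φ ψ : ℝ → ℝ} (hφ : InH1 φ) (hψ : InH1 ψ)
    (hconstr : (∫ x : ℝ, φ x ^ 2 * ψ x) = lam)
    (hmin : Ifun α₀ β₀ φ ψ = Mfun α₀ β₀ lam) (hM : 0 < Mfun α₀ β₀ lam)
    {m δ : ℝ} (hm : 0 < m) (hmα : m ≤ α₀) (hmβ : m ≤ β₀) (hδ : 0 < δ) (hδm : δ ^ 2 = m / 4) :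
    ∃ C > 0, ∀ s, |s| = δ → ∀ ε > 0, ∀ x,
      (φ x * weight s ε x) ^ 2 ≤ C ∧ (ψ x * weight s ε x) ^ 2 ≤ C := by
  set M := Mfun α₀ β₀ lam
  set K := M / lam with hK
  have hKpos : 0 < K := by positivity
  obtain ⟨B, hBpos, hB⟩ := hψ.bounded
  obtain ⟨R, hR, hsmall⟩ := hψ.small (e := m / (2 * K)) (by positivity)
  set C0 := K * B * Real.exp (δ * R) ^ 2 with hC0
  have hC0pos : 0 < C0 := by positivity
  set N := ∫ x, φ x ^ 2
  have hN : 0 ≤ N := integral_nonneg fun x => sq_nonneg _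
  refine ⟨(4 / m + 1) * (C0 * N) + 1, by positivity, fun s hs ε hε => ?_⟩
  set η := weight s ε with hη
  have hηpos : ∀ x, 0 < η x := weight_pos s hε
  have hηd : ∀ x, HasDerivAt η (weight' s ε x) x := weight_hasDerivAt s hε
  have hηle : ∀ x, |η x| ≤ ε⁻¹ := fun x => by
    rw [abs_of_pos (hηpos x)]; exact weight_le s hε x
  have hηd' : ∀ x, |weight' s ε x| ≤ δ * η x := fun x => by
    rw [← hs]; exact weight'_abs_le s hε x
  have hηdle : ∀ x, |weight' s ε x| ≤ δ * ε⁻¹ := fun x =>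
    (hηd' x).trans (mul_le_mul_of_nonneg_left (weight_le s hε x) hδ.le)
  have hφη := hφ.mul_bdd hηd hηle hηdle
  have hψη := hψ.mul_bdd hηd hηle hηdle
  have hu := hφη.mul_bdd hηd hηle hηdle
  have hv := hψη.mul_bdd hηd hηle hηdle
  have dη : ∀ {f : ℝ → ℝ}, InH1 f → ∀ x,
      deriv (fun x => f x * η x) x = deriv f x * η x + f x * weight' s ε x :=
    fun hf x => ((hf.1 x).hasDerivAt.mul (hηd x)).deriv
  have EL := euler_lagrange hα hβ hlam hφ hψ hu hv hconstr hmin hM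
  have hcubic : ∫ x, (2 * (φ x * (φ x * η x * η x) * ψ x) + φ x * φ x * (ψ x * η x * η x))
      = 3 * ∫ x, (φ x * η x) * (φ x * η x) * ψ x := by
    rw [← integral_const_mul]; congr 1; ext x; ring
  rw [hcubic] at EL
  have EL' : ∫ x, (deriv φ x * deriv (fun x => φ x * η x * η x) x
      + deriv ψ x * deriv (fun x => ψ x * η x * η x) x + α₀ * (φ x * (φ x * η x * η x))
        + β₀ * (ψ x * (ψ x * η x * η x))) = K * ∫ x, (φ x * η x) * (φ x * η x) * ψ x := by
    rw [hK, div_mul_eq_mul_div, eq_div_iff hlam.ne']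
    linear_combination EL / 3
  have iA : Integrable (fun x => deriv φ x * deriv (fun x => φ x * η x * η x) x
      + deriv ψ x * deriv (fun x => ψ x * η x * η x) x + α₀ * (φ x * (φ x * η x * η x))
        + β₀ * (ψ x * (ψ x * η x * η x))) :=
    (((hφ.int_deriv_mul hu).add (hψ.int_deriv_mul hv)).add ((hφ.int_mul hu).const_mul _)).add
      ((hψ.int_mul hv).const_mul _)
  have iP := hφη.int_mul_mul hφη hψ
  -- `E` is what remains of the weighted energy density once the cubic term and `η'` are absorbed.
  set E : ℝ → ℝ := fun x => deriv (fun x => φ x * η x) x ^ 2 + deriv (fun x => ψ x * η x) x ^ 2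
    + m / 4 * ((φ x * η x) ^ 2 + (ψ x * η x) ^ 2) with hE
  have iE : Integrable E := (hφη.2.2.add hψη.2.2).add ((hφη.2.1.add hψη.2.1).const_mul _)
  have hpt : ∀ x, E x ≤ (deriv φ x * deriv (fun x => φ x * η x * η x) x
      + deriv ψ x * deriv (fun x => ψ x * η x * η x) x + α₀ * (φ x * (φ x * η x * η x))
        + β₀ * (ψ x * (ψ x * η x * η x))) - K * ((φ x * η x) * (φ x * η x) * ψ x)
        + C0 * φ x ^ 2 := by
    intro x
    have w2 : weight' s ε x ^ 2 ≤ m / 4 * η x ^ 2 := by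
      rw [← hδm, ← mul_pow, ← sq_abs]
      exact pow_le_pow_left₀ (abs_nonneg _) (hηd' x) 2
    have a1 := mul_le_mul_of_nonneg_left w2 (sq_nonneg (φ x))
    have a2 := mul_le_mul_of_nonneg_left w2 (sq_nonneg (ψ x))
    have b1 := mul_le_mul_of_nonneg_right hmα (sq_nonneg (φ x * η x))
    have b2 := mul_le_mul_of_nonneg_right hmβ (sq_nonneg (ψ x * η x))
    have cub : K * ((φ x * η x) * (φ x * η x) * ψ x) ≤ m / 2 * (φ x * η x) ^ 2
        + C0 * φ x ^ 2 := by
      rcases le_total R |x| with h | h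
      · have h1 : K * ψ x ≤ m / 2 := by
          have := mul_le_mul_of_nonneg_left ((le_abs_self _).trans (hsmall x h)) hKpos.le
          calc _ ≤ _ := this
            _ = _ := by field_simp
        have := mul_le_mul_of_nonneg_right h1 (sq_nonneg (φ x * η x))
        nlinarith [mul_nonneg hC0pos.le (sq_nonneg (φ x))]
      · have h1 : η x ≤ Real.exp (δ * R) := by
          refine (weight_le_exp s hε x).trans (Real.exp_le_exp.2 ?_)
          calc s * x ≤ |s * x| := le_abs_self _
            _ = δ * |x| := by rw [abs_mul, hs]
            _ ≤ _ := mul_le_mul_of_nonneg_left h hδ.le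
        have h2 : η x ^ 2 ≤ Real.exp (δ * R) ^ 2 := pow_le_pow_left₀ (hηpos x).le h1 2
        have h3 : K * ψ x * η x ^ 2 ≤ C0 := by
          calc K * ψ x * η x ^ 2 ≤ K * B * η x ^ 2 := by
                have := (le_abs_self _).trans (hB x)
                gcongr
            _ ≤ _ := by rw [hC0]; gcongr
        have := mul_le_mul_of_nonneg_right h3 (sq_nonneg (φ x))
        nlinarith [mul_nonneg hm.le (sq_nonneg (φ x * η x))]
    simp only [hE]
    rw [dη hφη, dη hψη, dη hφ, dη hψ]
    linarith [mul_nonneg hm.le (sq_nonneg (ψ x * η x))]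
  have hEint : ∫ x, E x ≤ C0 * N := by
    have h := integral_mono iE ((iA.sub (iP.const_mul K)).add (hφ.2.1.const_mul C0)) hpt
    have e1 := integral_add (iA.sub (iP.const_mul K)) (hφ.2.1.const_mul C0)
    have e2 := integral_sub iA (iP.const_mul K)
    rw [integral_const_mul, EL', sub_self] at e2
    rw [integral_const_mul] at e1
    simp only [Pi.sub_apply, Pi.add_apply] at h e1 e2
    rw [e1, e2] at h
    linarith
  have fin : ∀ {p : ℝ → ℝ}, InH1 p → (∀ y, p y ^ 2 * (m / 4) + deriv p y ^ 2 ≤ E y) →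
      ∀ x, p x ^ 2 ≤ (4 / m + 1) * (C0 * N) + 1 := by
    intro p hp hpE x
    have hle : ∫ y, (p y ^ 2 + deriv p y ^ 2) ≤ ∫ y, (4 / m + 1) * E y := by
      refine integral_mono (hp.2.1.add hp.2.2) (iE.const_mul _) fun y => ?_
      have h := mul_le_mul_of_nonneg_left (hpE y) (show 0 ≤ 4 / m + 1 by positivity)
      have e : (4 / m + 1) * (p y ^ 2 * (m / 4) + deriv p y ^ 2)
          = p y ^ 2 + deriv p y ^ 2 + (m / 4 * p y ^ 2 + 4 / m * deriv p y ^ 2) := by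
        field_simp
        ring
      have : 0 ≤ m / 4 * p y ^ 2 + 4 / m * deriv p y ^ 2 := by positivity
      simp only
      linarith
    rw [integral_const_mul] at hle
    have := mul_le_mul_of_nonneg_left hEint (show 0 ≤ 4 / m + 1 by positivity)
    linarith [hp.sq_le x]
  refine fun x => ⟨fin hφη (fun y => ?_) x, fin hψη (fun y => ?_) x⟩
  · have : 0 ≤ deriv (fun x => ψ x * η x) y ^ 2 + m / 4 * (ψ y * η y) ^ 2 := by positivity
    simp only [hE]
    linarith
  · have : 0 ≤ deriv (fun x => φ x * η x) y ^ 2 + m / 4 * (φ y * η y) ^ 2 := by positivity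
    simp only [hE]
    linarith

/-- Passage to the limit `ε → 0` in the weighted pointwise bound, for both signs of `s`. -/
lemma decay_of_weight {f : ℝ → ℝ} {C δ : ℝ}
    (h : ∀ s, |s| = δ → ∀ ε > 0, ∀ x, (f x * weight s ε x) ^ 2 ≤ C) (hδ : 0 < δ) (x : ℝ) :
    |f x| ≤ √C * Real.exp (-δ * |x|) := by
  have main : ∀ s, |s| = δ → |f x| ≤ √C * Real.exp (-s * x) := by
    intro s hs
    have hε : ∀ ε > 0, |f x| ≤ √C * (Real.exp (-s * x) + ε) := by
      intro ε hε
      have h1 := Real.abs_le_sqrt (h s hs ε hε x)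
      rw [abs_mul, abs_of_pos (weight_pos s hε x), weight, ← div_eq_mul_inv,
        div_le_iff₀ (by positivity)] at h1
      exact h1
    have ht : Tendsto (fun ε => √C * (Real.exp (-s * x) + ε)) (𝓝[>] 0)
        (𝓝 (√C * (Real.exp (-s * x) + 0))) :=
      (Continuous.tendsto (by fun_prop) 0).mono_left nhdsWithin_le_nhds
    rw [add_zero] at ht
    exact ge_of_tendsto ht (eventually_mem_nhdsWithin.mono fun ε he => hε ε he)
  rcases le_total 0 x with hx | hx
  · rw [abs_of_nonneg hx]
    exact main δ (abs_of_pos hδ)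
  · have := main (-δ) (by rw [abs_neg, abs_of_pos hδ])
    rw [abs_of_nonpos hx]
    convert this using 3
    ring

lemma Ifun_pos {α₀ β₀ lam : ℝ} (hα : 0 < α₀) (hβ : 0 < β₀) (hlam : 0 < lam)
    {φ ψ : ℝ → ℝ} (hφ : InH1 φ) (hψ : InH1 ψ)
    (hconstr : (∫ x : ℝ, φ x ^ 2 * ψ x) = lam) : 0 < Ifun α₀ β₀ φ ψ := by
  refine (Ifun_nonneg hα hβ φ ψ).lt_of_ne fun h0 => hlam.ne ?_
  have hi : Integrable (fun x => deriv φ x ^ 2 + deriv ψ x ^ 2 + α₀ * φ x ^ 2 + β₀ * ψ x ^ 2) :=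
    ((hφ.2.2.add hψ.2.2).add (hφ.2.1.const_mul _)).add (hψ.2.1.const_mul _)
  have hz := (integral_eq_zero_iff_of_nonneg (fun x => by dsimp only [Pi.zero_apply]; positivity)
    hi).1 h0.symm
  rw [← hconstr]
  symm
  refine integral_eq_zero_of_ae ?_
  filter_upwards [hz] with x hx
  simp only [Pi.zero_apply] at hx ⊢
  have h1 : α₀ * φ x ^ 2 = 0 := le_antisymm
    (by nlinarith [sq_nonneg (deriv φ x), sq_nonneg (deriv ψ x), mul_nonneg hβ.le (sq_nonneg (ψ x))])
    (by positivity)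
  rcases mul_eq_zero.1 h1 with h | h
  · exact absurd h hα.ne'
  · rw [h, zero_mul]

/-- any minimizer `(φ, ψ)` decays exponentially at infinity. -/
theorem minimizer_exponential_decay (α₀ β₀ lam : ℝ)
    (hα : 0 < α₀) (hβ : 0 < β₀) (hlam : 0 < lam)
    (φ ψ : ℝ → ℝ) (hφ : InH1 φ) (hψ : InH1 ψ)
    (hconstr : (∫ x : ℝ, φ x ^ 2 * ψ x) = lam)
    (hmin : Ifun α₀ β₀ φ ψ = Mfun α₀ β₀ lam) :
    ∃ δ > (0 : ℝ), ∃ C > (0 : ℝ), ∀ x : ℝ,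
      |φ x| ≤ C * Real.exp (-δ * |x|) ∧ |ψ x| ≤ C * Real.exp (-δ * |x|) := by
  have hM : 0 < Mfun α₀ β₀ lam := hmin ▸ Ifun_pos hα hβ hlam hφ hψ hconstr
  have hm : 0 < min α₀ β₀ := lt_min hα hβ
  have hδ : 0 < √(min α₀ β₀ / 4) := by positivity
  obtain ⟨C, hC, h⟩ := weighted_bound hα hβ hlam hφ hψ hconstr hmin hM hm (min_le_left _ _)
    (min_le_right _ _) hδ (Real.sq_sqrt (by positivity))
  exact ⟨_, hδ, √C, by positivity, fun x =>
    ⟨decay_of_weight (fun s hs ε hε x => (h s hs ε hε x).1) hδ x,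
      decay_of_weight (fun s hs ε hε x => (h s hs ε hε x).2) hδ x⟩⟩
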